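/- arXiv:1104.1209 — 2 statements merged into one kernel-verified Lean document; each statement's English description precedes it below -/
import Mathlib

section
/- If p is a polynomial of degree at most d on ℝ^n and t > 2 is a real number, then |p|_t ≤ (t − 1)^{d/2} · |p|_2. -/
open MeasureTheory ProbabilityTheory

/-- The standard Gaussian measure on `ℝ^n`. -/
noncomputable def stdGaussian (n : ℕ) : Measure (Fin n → ℝ) :=
  Measure.pi fun _ => gaussianReal 0 1

/-- `N_Y^θ(X) = cos θ · X + sin θ · Y`. -/
noncomputable def noisy {n : ℕ} (θ : ℝ) (Y X : Fin n → ℝ) : Fin n → ℝ :=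
  Real.cos θ • X + Real.sin θ • Y

/-- The noisy derivative `D_{Y,Z}^θ f (X)`. -/
noncomputable def noisyDeriv {n : ℕ} (θ : ℝ) (Y Z : Fin n → ℝ)
    (f : (Fin n → ℝ) → ℝ) (X : Fin n → ℝ) : ℝ :=
  (f (noisy θ Y X) - f (noisy θ Z X)) / θ

/-- `|f_θ^{(ℓ)}(X)|₂²`, the mean square of the `ℓ`-fold noisy derivative over
independent standard Gaussian directions. -/
noncomputable def derivNormSq (n : ℕ) (θ : ℝ) : ℕ → ((Fin n → ℝ) → ℝ) → (Fin n → ℝ) → ℝ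
  | 0, f, X => (f X) ^ 2
  | (ℓ+1), f, X =>
      ∫ YZ : (Fin n → ℝ) × (Fin n → ℝ),
        derivNormSq n θ ℓ (noisyDeriv θ YZ.1 YZ.2 f) X
        ∂((stdGaussian n).prod (stdGaussian n))

/-- The averaging operator `A^θ f (X) = E_Y[f(N_Y^θ(X))]`. -/
noncomputable def avgOp (n : ℕ) (θ : ℝ) (f : (Fin n → ℝ) → ℝ) (X : Fin n → ℝ) : ℝ :=
  ∫ Y, f (noisy θ Y X) ∂(stdGaussian n)

/-- `q_{ℓ,m}(X) = |p_θ^{(ℓ),m}(X)|₂² = (A^θ)^m |p_θ^{(ℓ)}(X)|₂²`. -/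
noncomputable def qlm (n : ℕ) (θ : ℝ) (p : MvPolynomial (Fin n) ℝ) (ℓ m : ℕ)
    (X : Fin n → ℝ) : ℝ :=
  (avgOp n θ)^[m] (derivNormSq n θ ℓ (fun W => MvPolynomial.eval W p)) X

/-- The Gaussian `L^k` norm of a function on `ℝ^n`. -/
noncomputable def gaussNorm (n : ℕ) (k : ℝ) (p : (Fin n → ℝ) → ℝ) : ℝ :=
  (∫ X, |p X| ^ k ∂(stdGaussian n)) ^ (1 / k)

/-- `f` is a degree-`d` polynomial threshold function on `ℝ^n`. -/
def isPTF (n d : ℕ) (f : (Fin n → ℝ) → ℝ) : Prop :=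
  ∃ p : MvPolynomial (Fin n) ℝ, p.totalDegree ≤ d ∧
    ∀ x, f x = Real.sign (MvPolynomial.eval x p)

/-- `X` is a `k`-independent family of standard Gaussians: any `m ≤ k` distinct
coordinates are jointly distributed as `m` independent standard Gaussians. -/
def kIndepGaussian {Ω : Type} [MeasurableSpace Ω] (n k : ℕ) (P : Measure Ω)
    (X : Ω → (Fin n → ℝ)) : Prop :=
  ∀ m : ℕ, m ≤ k → ∀ ι : Fin m → Fin n, Function.Injective ι →
    Measure.map (fun ω i => X ω (ι i)) P = Measure.pi fun _ : Fin m => gaussianReal 0 1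

/-!
Suppose first that `f` is evaluated at a signed sum `±v₁ ± ⋯ ± vₘ` with independent random signs.
Splitting off one summand, `f (x ± v) = A x ± B x`, where `A` has degree at most `d` and `B`, half
a difference of `f`, has degree at most `d - 1`. The two-point inequality
`(|a + b|^q + |a - b|^q) / 2 ≤ (a² + (q - 1) b²)^(q/2)` and Minkowski's inequality in `L^(q/2)`
give `‖f‖_q² ≤ ‖A‖_q² + (q - 1) ‖B‖_q²`, while `‖f‖₂² = ‖A‖₂² + ‖B‖₂²` by the parallelogram law,
so `‖f‖_q² ≤ (q - 1)^d ‖f‖₂²` follows by induction on the number of signs.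

The central limit theorem transfers this to the Gaussian measure. Passing to the limit on the
right-hand side is legitimate because `‖f‖_q ≤ C ‖f‖₂` with `q > 2` is itself a uniform
integrability statement for `f²`: no mass of the second moments can escape to infinity.
-/

open Filter Topology
open scoped ENNReal NNReal fwdDiff BoundedContinuousFunction

section TwoPoint

lemma one_add_rpow_sub_one_sub_rpow_le {r b : ℝ} (hr : 1 ≤ r) (hb : b ∈ Set.Icc (0 : ℝ) 1) :
    (1 + b) ^ r - (1 - b) ^ r ≤ r * b * ((1 + b) ^ r + (1 - b) ^ r) := by
  let G : ℝ → ℝ := fun x ↦ r * x * ((1 + x) ^ r + (1 - x) ^ r) - ((1 + x) ^ r - (1 - x) ^ r)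
  have hmono : MonotoneOn G (Set.Icc 0 1) := by
    refine monotoneOn_of_hasDerivWithinAt_nonneg (convex_Icc 0 1)
      (f' := fun x ↦ r * (r + 1) * x * ((1 + x) ^ (r - 1) - (1 - x) ^ (r - 1))) ?_ ?_ ?_
    · have hr0 : 0 ≤ r := by linarith
      unfold G
      fun_prop (disch := assumption)
    · intro x hx
      rw [interior_Icc] at hx
      have hplus := ((hasDerivAt_id x).const_add 1).rpow_const (p := r) (Or.inr hr)
      have hminus := ((hasDerivAt_id x).const_sub 1).rpow_const (p := r) (Or.inr hr)
      refine (((((hasDerivAt_id x).const_mul r).mul (hplus.add hminus)).sub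
        (hplus.sub hminus)).congr_deriv ?_).hasDerivWithinAt
      have eplus : (1 + x) ^ r = (1 + x) ^ (r - 1) * (1 + x) := by
        rw [← Real.rpow_add_one (by linarith [hx.1]), sub_add_cancel]
      have eminus : (1 - x) ^ r = (1 - x) ^ (r - 1) * (1 - x) := by
        rw [← Real.rpow_add_one (by linarith [hx.2]), sub_add_cancel]
      simp only [Pi.add_apply, id, eplus, eminus]
      ring
    · intro x hx
      rw [interior_Icc] at hx
      have hle : (1 - x) ^ (r - 1) ≤ (1 + x) ^ (r - 1) :=
        Real.rpow_le_rpow (by linarith [hx.2]) (by linarith [hx.1]) (by linarith)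
      exact mul_nonneg (mul_nonneg (by positivity) hx.1.le) (sub_nonneg.2 hle)
  have hG := hmono (Set.left_mem_Icc.2 zero_le_one) hb hb.1
  simp only [G, mul_zero, add_zero, sub_zero, Real.one_rpow, zero_mul, sub_self] at hG
  linarith

lemma one_add_rpow_add_one_sub_rpow_le {q b : ℝ} (hq : 2 ≤ q) (hb : b ∈ Set.Icc (0 : ℝ) 1) :
    (1 + b) ^ q + (1 - b) ^ q ≤ 2 * (1 + (q - 1) * b ^ 2) ^ (q / 2) := by
  have hpos (x : ℝ) : 0 < 1 + (q - 1) * x ^ 2 := by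
    have : 0 ≤ q - 1 := by linarith
    positivity
  let G : ℝ → ℝ := fun x ↦ ((1 + x) ^ q + (1 - x) ^ q) * (1 + (q - 1) * x ^ 2) ^ (-(q / 2))
  have hanti : AntitoneOn G (Set.Icc 0 1) := by
    refine antitoneOn_of_hasDerivWithinAt_nonpos (convex_Icc 0 1)
      (f' := fun x ↦ q * (1 + (q - 1) * x ^ 2) ^ (-(q / 2) - 1) *
        (((1 + x) ^ (q - 1) - (1 - x) ^ (q - 1)) -
          (q - 1) * x * ((1 + x) ^ (q - 1) + (1 - x) ^ (q - 1)))) ?_ ?_ ?_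
    · have hq0 : 0 ≤ q := by linarith
      have hden : Continuous fun x : ℝ ↦ (1 + (q - 1) * x ^ 2) ^ (-(q / 2)) :=
        Continuous.rpow_const (by fun_prop) fun x ↦ Or.inl (hpos x).ne'
      unfold G
      fun_prop (disch := assumption)
    · intro x hx
      rw [interior_Icc] at hx
      have hq1 : 1 ≤ q := by linarith
      have hplus := ((hasDerivAt_id x).const_add 1).rpow_const (p := q) (Or.inr hq1)
      have hminus := ((hasDerivAt_id x).const_sub 1).rpow_const (p := q) (Or.inr hq1)
      have hden := (((hasDerivAt_pow 2 x).const_mul (q - 1)).const_add 1).rpow_const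
        (p := -(q / 2)) (Or.inl (hpos x).ne')
      refine (((hplus.add hminus).mul hden).congr_deriv ?_).hasDerivWithinAt
      have eplus : (1 + x) ^ q = (1 + x) ^ (q - 1) * (1 + x) := by
        rw [← Real.rpow_add_one (by linarith [hx.1]), sub_add_cancel]
      have eminus : (1 - x) ^ q = (1 - x) ^ (q - 1) * (1 - x) := by
        rw [← Real.rpow_add_one (by linarith [hx.2]), sub_add_cancel]
      have eden : (1 + (q - 1) * x ^ 2) ^ (-(q / 2)) =
          (1 + (q - 1) * x ^ 2) ^ (-(q / 2) - 1) * (1 + (q - 1) * x ^ 2) := by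
        rw [← Real.rpow_add_one (hpos x).ne', sub_add_cancel]
      simp only [Pi.add_apply, id, eplus, eminus, eden]
      push_cast
      ring
    · intro x hx
      rw [interior_Icc] at hx
      have hlog := one_add_rpow_sub_one_sub_rpow_le (r := q - 1) (by linarith)
        (Set.Ioo_subset_Icc_self hx)
      exact mul_nonpos_of_nonneg_of_nonpos
        (mul_nonneg (by linarith) (Real.rpow_nonneg (hpos x).le _)) (by linarith)
  have hG : G b ≤ G 0 := hanti (Set.left_mem_Icc.2 zero_le_one) hb hb.1
  have hG0 : G 0 = 2 := by norm_num [G]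
  rw [hG0] at hG
  simp only [G] at hG
  rwa [Real.rpow_neg (hpos b).le, ← div_eq_mul_inv,
    div_le_iff₀ (Real.rpow_pos_of_pos (hpos b) _)] at hG

lemma add_rpow_add_sub_rpow_le {q a b : ℝ} (hq : 2 ≤ q) (hb : 0 ≤ b) (hba : b ≤ a) :
    (a + b) ^ q + (a - b) ^ q ≤ 2 * (a ^ 2 + (q - 1) * b ^ 2) ^ (q / 2) := by
  have hq1 : 0 ≤ q - 1 := by linarith
  rcases (hb.trans hba).eq_or_lt with rfl | ha
  · obtain rfl : b = 0 := by linarith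
    simp [Real.zero_rpow (by linarith : q ≠ 0), Real.zero_rpow (by linarith : q / 2 ≠ 0)]
  have hmem : b / a ∈ Set.Icc (0 : ℝ) 1 := ⟨by positivity, (div_le_one ha).2 hba⟩
  have hsq : (a ^ 2) ^ (q / 2) = a ^ q := by
    rw [← Real.rpow_natCast_mul ha.le]
    congr 1
    push_cast
    ring
  calc (a + b) ^ q + (a - b) ^ q
      = (a * (1 + b / a)) ^ q + (a * (1 - b / a)) ^ q := by congr 2 <;> field_simp
    _ = a ^ q * ((1 + b / a) ^ q + (1 - b / a) ^ q) := by
        rw [Real.mul_rpow ha.le (by linarith [hmem.1]), Real.mul_rpow ha.le (by linarith [hmem.2]),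
          mul_add]
    _ ≤ a ^ q * (2 * (1 + (q - 1) * (b / a) ^ 2) ^ (q / 2)) := by
        gcongr
        exact one_add_rpow_add_one_sub_rpow_le hq hmem
    _ = 2 * (a ^ 2 * (1 + (q - 1) * (b / a) ^ 2)) ^ (q / 2) := by
        rw [Real.mul_rpow (by positivity) (by positivity), hsq]
        ring
    _ = 2 * (a ^ 2 + (q - 1) * b ^ 2) ^ (q / 2) := by
        congr 2
        field_simp

lemma abs_add_rpow_add_abs_sub_rpow_le {q : ℝ} (hq : 2 ≤ q) (a b : ℝ) :
    |a + b| ^ q + |a - b| ^ q ≤ 2 * (a ^ 2 + (q - 1) * b ^ 2) ^ (q / 2) := by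
  wlog ha : 0 ≤ a generalizing a
  · have h := this (-a) (by linarith)
    rwa [neg_sq, ← abs_neg (-a + b), ← abs_neg (-a - b), neg_add, neg_sub, neg_neg,
      ← sub_eq_add_neg, sub_neg_eq_add, add_comm b a, add_comm (|a - b| ^ q)] at h
  wlog hb : 0 ≤ b generalizing b
  · have h := this (-b) (by linarith)
    rwa [neg_sq, ← sub_eq_add_neg, sub_neg_eq_add, add_comm (|a - b| ^ q)] at h
  rw [abs_of_nonneg (add_nonneg ha hb)]
  rcases le_total b a with hba | hab
  · rw [abs_of_nonneg (sub_nonneg.2 hba)]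
    exact add_rpow_add_sub_rpow_le hq hb hba
  · have hswap : b ^ 2 + (q - 1) * a ^ 2 ≤ a ^ 2 + (q - 1) * b ^ 2 := by
      nlinarith [mul_nonneg (by linarith : 0 ≤ q - 2) (sub_nonneg.2 (pow_le_pow_left₀ ha hab 2))]
    have hq1 : 0 ≤ q - 1 := by linarith
    rw [abs_sub_comm, abs_of_nonneg (sub_nonneg.2 hab), add_comm a b]
    refine (add_rpow_add_sub_rpow_le hq ha hab).trans ?_
    gcongr

lemma enorm_add_rpow_add_enorm_sub_rpow_le {q : ℝ} (hq : 2 ≤ q) (a b : ℝ) :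
    ‖a + b‖ₑ ^ q + ‖a - b‖ₑ ^ q ≤
      2 * (‖a‖ₑ ^ 2 + ENNReal.ofReal (q - 1) * ‖b‖ₑ ^ 2) ^ (q / 2) := by
  have hq1 : 0 ≤ q - 1 := by linarith
  have h := ENNReal.ofReal_le_ofReal (abs_add_rpow_add_abs_sub_rpow_le hq a b)
  rw [ENNReal.ofReal_add (by positivity) (by positivity), ENNReal.ofReal_mul zero_le_two,
    ← ENNReal.ofReal_rpow_of_nonneg (abs_nonneg _) (by linarith),
    ← ENNReal.ofReal_rpow_of_nonneg (abs_nonneg _) (by linarith),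
    ← ENNReal.ofReal_rpow_of_nonneg (by positivity) (by linarith),
    ENNReal.ofReal_add (by positivity) (by positivity), ENNReal.ofReal_mul hq1,
    ← sq_abs a, ← sq_abs b, ENNReal.ofReal_pow (abs_nonneg a), ENNReal.ofReal_pow (abs_nonneg b),
    ENNReal.ofReal_ofNat] at h
  simpa only [Real.enorm_eq_ofReal_abs] using h

end TwoPoint

section UniformSmoothness

variable {α : Type*} [MeasurableSpace α] {μ : Measure α}

lemma eLpNorm'_rpow {f : α → ℝ} {q : ℝ} (hq : 0 < q) :
    eLpNorm' f q μ ^ q = ∫⁻ x, ‖f x‖ₑ ^ q ∂μ := by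
  rw [eLpNorm'_eq_lintegral_enorm, ← ENNReal.rpow_mul, one_div_mul_cancel hq.ne', ENNReal.rpow_one]

lemma eLpNorm'_sq {f : α → ℝ} {q : ℝ} (hq : 0 < q) :
    eLpNorm' f q μ ^ 2 = (∫⁻ x, (‖f x‖ₑ ^ 2) ^ (q / 2) ∂μ) ^ (1 / (q / 2)) := by
  have hin : ((2 : ℕ) : ℝ) * (q / 2) = q := by norm_num [mul_div_cancel₀]
  have hout : 1 / q * ((2 : ℕ) : ℝ) = 1 / (q / 2) := by field_simp; norm_num
  simp_rw [eLpNorm'_eq_lintegral_enorm, ← ENNReal.rpow_natCast, ← ENNReal.rpow_mul, hin, hout]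

lemma eLpNorm'_two_sq {f : α → ℝ} : eLpNorm' f 2 μ ^ 2 = ∫⁻ x, ‖f x‖ₑ ^ 2 ∂μ := by
  simpa using eLpNorm'_sq (μ := μ) (f := f) two_pos

lemma eLpNorm'_add_rpow_add_eLpNorm'_sub_rpow_le {q : ℝ} (hq : 2 ≤ q) {f g : α → ℝ}
    (hf : AEMeasurable f μ) (hg : AEMeasurable g μ) :
    ((eLpNorm' (f + g) q μ ^ q + eLpNorm' (f - g) q μ ^ q) / 2) ^ (2 / q) ≤
      eLpNorm' f q μ ^ 2 + ENNReal.ofReal (q - 1) * eLpNorm' g q μ ^ 2 := by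
  have hq0 : 0 < q := by linarith
  have hq2 : 0 ≤ q / 2 := by positivity
  have hpow : ∀ c : ℝ≥0∞, (c ^ (q / 2)) ^ (2 / q) = c := fun c ↦ by
    rw [← ENNReal.rpow_mul, div_mul_div_cancel₀ two_ne_zero, div_self hq0.ne', ENNReal.rpow_one]
  have hscale : (∫⁻ x, (ENNReal.ofReal (q - 1) * ‖g x‖ₑ ^ 2) ^ (q / 2) ∂μ) ^ (1 / (q / 2)) =
      ENNReal.ofReal (q - 1) * eLpNorm' g q μ ^ 2 := by
    simp_rw [ENNReal.mul_rpow_of_nonneg _ _ hq2]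
    rw [lintegral_const_mul'' _ (by fun_prop), ENNReal.mul_rpow_of_nonneg _ _ (by positivity),
      eLpNorm'_sq hq0, one_div_div, hpow]
  calc ((eLpNorm' (f + g) q μ ^ q + eLpNorm' (f - g) q μ ^ q) / 2) ^ (2 / q)
      = ((∫⁻ x, ‖f x + g x‖ₑ ^ q + ‖f x - g x‖ₑ ^ q ∂μ) / 2) ^ (2 / q) := by
        rw [eLpNorm'_rpow hq0, eLpNorm'_rpow hq0, lintegral_add_left' (by fun_prop)]
        rfl
    _ ≤ ((∫⁻ x, 2 * (‖f x‖ₑ ^ 2 + ENNReal.ofReal (q - 1) * ‖g x‖ₑ ^ 2) ^ (q / 2) ∂μ) / 2) ^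
          (2 / q) := by
        gcongr with x
        exact enorm_add_rpow_add_enorm_sub_rpow_le hq _ _
    _ = (∫⁻ x, (‖f x‖ₑ ^ 2 + ENNReal.ofReal (q - 1) * ‖g x‖ₑ ^ 2) ^ (q / 2) ∂μ) ^
          (1 / (q / 2)) := by
        rw [lintegral_const_mul' _ _ ENNReal.ofNat_ne_top, mul_comm,
          ENNReal.mul_div_cancel_right two_ne_zero ENNReal.ofNat_ne_top, one_div_div]
    _ ≤ eLpNorm' f q μ ^ 2 + ENNReal.ofReal (q - 1) * eLpNorm' g q μ ^ 2 := by
        rw [eLpNorm'_sq hq0, ← hscale]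
        exact ENNReal.lintegral_Lp_add_le (by fun_prop) (by fun_prop) (by linarith)

lemma eLpNorm'_two_add_sq_add_eLpNorm'_two_sub_sq {f g : α → ℝ} (hf : AEMeasurable f μ)
    (hg : AEMeasurable g μ) :
    eLpNorm' (f + g) 2 μ ^ 2 + eLpNorm' (f - g) 2 μ ^ 2 =
      2 * (eLpNorm' f 2 μ ^ 2 + eLpNorm' g 2 μ ^ 2) := by
  have parallelogram (a b : ℝ) : ‖a + b‖ₑ ^ 2 + ‖a - b‖ₑ ^ 2 = 2 * (‖a‖ₑ ^ 2 + ‖b‖ₑ ^ 2) := by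
    simp only [← enorm_pow, Real.enorm_of_nonneg (sq_nonneg _),
      ← ENNReal.ofReal_add (sq_nonneg _) (sq_nonneg _), ← ENNReal.ofReal_ofNat 2,
      ← ENNReal.ofReal_mul zero_le_two]
    congr 1
    ring
  simp_rw [eLpNorm'_two_sq]
  rw [← lintegral_add_left' (by fun_prop), ← lintegral_add_left' (by fun_prop),
    ← lintegral_const_mul' _ _ ENNReal.ofNat_ne_top]
  exact lintegral_congr fun x ↦ parallelogram (f x) (g x)

end UniformSmoothness

section FrechetPolynomial

/-- Polynomial functions on an abelian group in the sense of Fréchet, without reference to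
coordinates: `f` has degree at most `d` if all its differences `Δ_[v] f` have degree at most
`d - 1`, where degree at most `0` means constant. -/
def IsFrechetPolynomial {G R : Type*} [AddCommGroup G] [AddCommGroup R] : ℕ → (G → R) → Prop
  | 0, f => ∃ c, f = Function.const G c
  | d + 1, f => ∀ v, IsFrechetPolynomial d (Δ_[v] f)

namespace IsFrechetPolynomial

variable {G R : Type*} [AddCommGroup G] {d e : ℕ}

section AddCommGroup

variable [AddCommGroup R] {f g : G → R}

lemma zero : IsFrechetPolynomial d (0 : G → R) := by
  induction d with
  | zero => exact ⟨0, rfl⟩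
  | succ d ih =>
    intro v
    rwa [show Δ_[v] (0 : G → R) = 0 from fwdDiff_const v (0 : R)]

lemma const (c : R) : IsFrechetPolynomial d (Function.const G c) := by
  cases d with
  | zero => exact ⟨c, rfl⟩
  | succ d =>
    intro v
    rw [show Δ_[v] (Function.const G c) = 0 from fwdDiff_const v c]
    exact zero

lemma mono (h : d ≤ e) (hf : IsFrechetPolynomial d f) : IsFrechetPolynomial e f := by
  induction d generalizing e f with
  | zero =>
    obtain ⟨c, rfl⟩ := hf
    exact const c
  | succ d ih =>
    obtain ⟨e, rfl⟩ := Nat.exists_eq_add_of_le' (Nat.one_le_of_lt h)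
    exact fun v ↦ ih (Nat.le_of_succ_le_succ h) (hf v)

lemma add (hf : IsFrechetPolynomial d f) (hg : IsFrechetPolynomial d g) :
    IsFrechetPolynomial d (f + g) := by
  induction d generalizing f g with
  | zero =>
    obtain ⟨a, rfl⟩ := hf
    obtain ⟨b, rfl⟩ := hg
    exact ⟨a + b, rfl⟩
  | succ d ih =>
    intro v
    rw [fwdDiff_add]
    exact ih (hf v) (hg v)

lemma sum {ι : Type*} {s : Finset ι} {f : ι → G → R}
    (hf : ∀ i ∈ s, IsFrechetPolynomial d (f i)) : IsFrechetPolynomial d (∑ i ∈ s, f i) :=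
  Finset.sum_induction f _ (fun _ _ ↦ add) zero hf

lemma comp_add_right (hf : IsFrechetPolynomial d f) (v : G) :
    IsFrechetPolynomial d fun x ↦ f (x + v) := by
  induction d generalizing f with
  | zero =>
    obtain ⟨c, rfl⟩ := hf
    exact ⟨c, rfl⟩
  | succ d ih =>
    intro w
    rw [show (Δ_[w] fun x ↦ f (x + v)) = fun x ↦ (Δ_[w] f) (x + v) from
      funext (fwdDiff_comp_add w f v)]
    exact ih (hf w)

lemma comp_add_sub_comp_add (hf : IsFrechetPolynomial (d + 1) f) (v w : G) :
    IsFrechetPolynomial d fun x ↦ f (x + v) - f (x + w) := by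
  convert (hf (v - w)).comp_add_right w using 2
  simp [fwdDiff, add_assoc]

lemma of_addMonoidHom (ℓ : G →+ R) : IsFrechetPolynomial 1 ℓ := fun v ↦
  ⟨ℓ v, by funext x; simp [fwdDiff]⟩

end AddCommGroup

section Ring

variable [CommRing R] {f g : G → R}

lemma const_mul (c : R) (hf : IsFrechetPolynomial d f) : IsFrechetPolynomial d fun x ↦ c * f x := by
  induction d generalizing f with
  | zero =>
    obtain ⟨a, rfl⟩ := hf
    exact ⟨c * a, rfl⟩
  | succ d ih =>
    intro v
    exact (fwdDiff_const_smul v c f) ▸ ih (hf v)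

lemma mul (hf : IsFrechetPolynomial d f) (hg : IsFrechetPolynomial e g) :
    IsFrechetPolynomial (d + e) (f * g) := by
  induction d generalizing e f g with
  | zero =>
    obtain ⟨c, rfl⟩ := hf
    rw [zero_add]
    exact hg.const_mul c
  | succ d ihd =>
    induction e generalizing f g with
    | zero =>
      obtain ⟨c, rfl⟩ := hg
      rw [mul_comm]
      exact hf.const_mul c
    | succ e ihe =>
      intro v
      have leibniz : Δ_[v] (f * g) = Δ_[v] f * (fun x ↦ g (x + v)) + f * Δ_[v] g := by
        funext x
        simp only [fwdDiff, Pi.mul_apply, Pi.add_apply]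
        ring
      rw [leibniz]
      exact ((ihd (hf v) (hg.comp_add_right v)).mono (by lia)).add (ihe hf (hg v))

lemma pow (hf : IsFrechetPolynomial d f) (n : ℕ) : IsFrechetPolynomial (n * d) (f ^ n) := by
  induction n with
  | zero => simpa using const (d := 0) (1 : R)
  | succ n ih => simpa only [pow_succ, Nat.succ_mul] using ih.mul hf

lemma prod {ι : Type*} {s : Finset ι} {d : ι → ℕ} {f : ι → G → R}
    (hf : ∀ i ∈ s, IsFrechetPolynomial (d i) (f i)) :
    IsFrechetPolynomial (∑ i ∈ s, d i) (∏ i ∈ s, f i) := by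
  classical
  induction s using Finset.induction_on with
  | empty => exact const 1
  | insert i s hi ih =>
    rw [Finset.sum_insert hi, Finset.prod_insert hi]
    exact (hf i (Finset.mem_insert_self i s)).mul
      (ih fun j hj ↦ hf j (Finset.mem_insert_of_mem hj))

lemma mvPolynomial_eval {σ : Type*} (p : MvPolynomial σ R) (ℓ : σ → G →+ R) :
    IsFrechetPolynomial p.totalDegree fun x ↦ MvPolynomial.eval (fun i ↦ ℓ i x) p := by
  have hmonomial (m : σ →₀ ℕ) (hm : m ∈ p.support) : IsFrechetPolynomial p.totalDegree
      fun x ↦ p.coeff m * ∏ i ∈ m.support, ℓ i x ^ m i := by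
    have hprod : IsFrechetPolynomial (∑ i ∈ m.support, m i * 1)
        (∏ i ∈ m.support, (ℓ i : G → R) ^ m i) :=
      prod fun i _ ↦ (of_addMonoidHom (ℓ i)).pow (m i)
    simp only [mul_one] at hprod
    convert (hprod.const_mul (p.coeff m)).mono (MvPolynomial.le_totalDegree hm) using 2
    simp
  convert sum hmonomial using 1
  funext x
  simp [MvPolynomial.eval_eq]

end Ring
end IsFrechetPolynomial
end FrechetPolynomial

section SignedSum

variable {E : Type*} [AddCommGroup E] [MeasurableSpace E]

/-- The law of `±v₁ ± ⋯ ± vₘ` with independent uniform signs, for a list `[v₁, …, vₘ]`. -/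
noncomputable def signedSumLaw : List E → Measure E
  | [] => Measure.dirac 0
  | v :: l => (2⁻¹ : ℝ≥0∞) •
      ((signedSumLaw l).map (· + v) + (signedSumLaw l).map (· + -v))

lemma eLpNorm'_signedSumLaw_nil {f : E → ℝ} (hf : Measurable f) {q : ℝ} (hq : 0 < q) :
    eLpNorm' f q (signedSumLaw []) = ‖f 0‖ₑ := by
  rw [eLpNorm'_eq_lintegral_enorm, signedSumLaw, lintegral_dirac' _ (by fun_prop),
    ← ENNReal.rpow_mul, mul_one_div_cancel hq.ne', ENNReal.rpow_one]

variable [MeasurableAdd E]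

instance (l : List E) : IsProbabilityMeasure (signedSumLaw l) := by
  induction l with
  | nil => exact Measure.dirac.isProbabilityMeasure
  | cons v l ih =>
    have hplus := Measure.isProbabilityMeasure_map (μ := signedSumLaw l)
      (measurable_add_const v).aemeasurable
    have hminus := Measure.isProbabilityMeasure_map (μ := signedSumLaw l)
      (measurable_add_const (-v)).aemeasurable
    refine ⟨?_⟩
    simp [signedSumLaw, ENNReal.inv_two_add_inv_two]

lemma lintegral_signedSumLaw_cons (v : E) (l : List E) {f : E → ℝ≥0∞} (hf : Measurable f) :
    ∫⁻ x, f x ∂signedSumLaw (v :: l) =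
      (∫⁻ x, f (x + v) ∂signedSumLaw l + ∫⁻ x, f (x + -v) ∂signedSumLaw l) / 2 := by
  rw [signedSumLaw, lintegral_smul_measure, lintegral_add_measure,
    lintegral_map hf (measurable_add_const v), lintegral_map hf (measurable_add_const (-v)),
    smul_eq_mul, ENNReal.div_eq_inv_mul]

lemma lintegral_signedSumLaw_lt_top (l : List E) {f : E → ℝ≥0∞} (hf : Measurable f)
    (hfin : ∀ x, f x ≠ ∞) : ∫⁻ x, f x ∂signedSumLaw l < ∞ := by
  induction l generalizing f with
  | nil => simpa [signedSumLaw, lintegral_dirac' _ hf] using (hfin 0).lt_top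
  | cons v l ih =>
    have hplus := ih (hf.comp (measurable_add_const v)) fun x ↦ hfin _
    have hminus := ih (hf.comp (measurable_add_const (-v))) fun x ↦ hfin _
    rw [lintegral_signedSumLaw_cons v l hf]
    exact ENNReal.div_lt_top (ENNReal.add_lt_top.2 ⟨hplus, hminus⟩).ne two_ne_zero

lemma eLpNorm'_signedSumLaw_ne_top (l : List E) {f : E → ℝ} (hf : Measurable f) {q : ℝ}
    (hq : 0 < q) : eLpNorm' f q (signedSumLaw l) ≠ ∞ := by
  rw [eLpNorm'_eq_lintegral_enorm]
  exact ENNReal.rpow_ne_top_of_nonneg (by positivity)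
    (lintegral_signedSumLaw_lt_top l (by fun_prop)
      fun x ↦ ENNReal.rpow_ne_top_of_nonneg hq.le enorm_ne_top).ne

lemma eLpNorm'_signedSumLaw_cons_rpow (v : E) (l : List E) {f : E → ℝ} (hf : Measurable f) {q : ℝ}
    (hq : 0 < q) : eLpNorm' f q (signedSumLaw (v :: l)) ^ q =
      (eLpNorm' (fun x ↦ f (x + v)) q (signedSumLaw l) ^ q +
        eLpNorm' (fun x ↦ f (x + -v)) q (signedSumLaw l) ^ q) / 2 := by
  simp_rw [eLpNorm'_rpow hq]
  exact lintegral_signedSumLaw_cons v l (by fun_prop)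

lemma eLpNorm'_signedSumLaw_cons_sq_le {v : E} (l : List E) {f A B : E → ℝ} {q : ℝ} (hq : 2 ≤ q)
    (hf : Measurable f) (hA : Measurable A) (hB : Measurable B)
    (hadd : A + B = fun x ↦ f (x + v)) (hsub : A - B = fun x ↦ f (x + -v)) :
    eLpNorm' f q (signedSumLaw (v :: l)) ^ 2 ≤ eLpNorm' A q (signedSumLaw l) ^ 2 +
      ENNReal.ofReal (q - 1) * eLpNorm' B q (signedSumLaw l) ^ 2 := by
  have hq0 : 0 < q := by linarith
  rw [← ENNReal.rpow_two, ← mul_div_cancel₀ 2 hq0.ne', ENNReal.rpow_mul,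
    eLpNorm'_signedSumLaw_cons_rpow v l hf hq0, ← hadd, ← hsub]
  exact eLpNorm'_add_rpow_add_eLpNorm'_sub_rpow_le hq hA.aemeasurable hB.aemeasurable

lemma eLpNorm'_two_signedSumLaw_cons_sq {v : E} (l : List E) {f A B : E → ℝ}
    (hf : Measurable f) (hA : Measurable A) (hB : Measurable B)
    (hadd : A + B = fun x ↦ f (x + v)) (hsub : A - B = fun x ↦ f (x + -v)) :
    eLpNorm' f 2 (signedSumLaw (v :: l)) ^ 2 =
      eLpNorm' A 2 (signedSumLaw l) ^ 2 + eLpNorm' B 2 (signedSumLaw l) ^ 2 := by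
  rw [← ENNReal.rpow_two, eLpNorm'_signedSumLaw_cons_rpow v l hf two_pos, ← hadd, ← hsub,
    ENNReal.rpow_two, ENNReal.rpow_two,
    eLpNorm'_two_add_sq_add_eLpNorm'_two_sub_sq hA.aemeasurable hB.aemeasurable, mul_comm,
    ENNReal.mul_div_cancel_right two_ne_zero ENNReal.ofNat_ne_top]

end SignedSum

section Bonami

variable {E : Type*} [AddCommGroup E] [MeasurableSpace E] [MeasurableAdd E]

lemma IsFrechetPolynomial.eLpNorm'_signedSumLaw_sq_le {d : ℕ} {f : E → ℝ} {q : ℝ} (hq : 2 ≤ q)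
    (hf : Measurable f) (hd : IsFrechetPolynomial d f) (l : List E) :
    eLpNorm' f q (signedSumLaw l) ^ 2 ≤
      ENNReal.ofReal (q - 1) ^ d * eLpNorm' f 2 (signedSumLaw l) ^ 2 := by
  have hq0 : 0 < q := by linarith
  have hc : 1 ≤ ENNReal.ofReal (q - 1) := by
    rw [ENNReal.one_le_ofReal]
    linarith
  induction l generalizing d f with
  | nil =>
    rw [eLpNorm'_signedSumLaw_nil hf hq0, eLpNorm'_signedSumLaw_nil hf two_pos]
    exact le_mul_of_one_le_left' (one_le_pow₀ hc)
  | cons v l ih =>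
    set ν := signedSumLaw l
    let A : E → ℝ := fun x ↦ 2⁻¹ * (f (x + v) + f (x + -v))
    let B : E → ℝ := fun x ↦ 2⁻¹ * (f (x + v) - f (x + -v))
    have hA : Measurable A := by fun_prop
    have hB : Measurable B := by fun_prop
    have hadd : A + B = fun x ↦ f (x + v) := by
      funext x
      simp only [A, B, Pi.add_apply]
      ring
    have hsub : A - B = fun x ↦ f (x + -v) := by
      funext x
      simp only [A, B, Pi.sub_apply]
      ring
    have hAd : IsFrechetPolynomial d A :=
      ((hd.comp_add_right v).add (hd.comp_add_right (-v))).const_mul 2⁻¹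
    have hAq := ih hA hAd
    have hBq : ENNReal.ofReal (q - 1) * eLpNorm' B q ν ^ 2 ≤
        ENNReal.ofReal (q - 1) ^ d * eLpNorm' B 2 ν ^ 2 := by
      cases d with
      | zero =>
        obtain ⟨c, rfl⟩ := hd
        have hB0 : B = 0 := by simp [B, Pi.zero_def]
        simp [hB0, eLpNorm'_zero hq0]
      | succ d =>
        rw [pow_succ' (ENNReal.ofReal (q - 1)), mul_assoc]
        gcongr
        exact ih hB ((hd.comp_add_sub_comp_add v (-v)).const_mul 2⁻¹)
    calc eLpNorm' f q (signedSumLaw (v :: l)) ^ 2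
        ≤ eLpNorm' A q ν ^ 2 + ENNReal.ofReal (q - 1) * eLpNorm' B q ν ^ 2 :=
          eLpNorm'_signedSumLaw_cons_sq_le l hq hf hA hB hadd hsub
      _ ≤ ENNReal.ofReal (q - 1) ^ d * eLpNorm' A 2 ν ^ 2 +
            ENNReal.ofReal (q - 1) ^ d * eLpNorm' B 2 ν ^ 2 := add_le_add hAq hBq
      _ = ENNReal.ofReal (q - 1) ^ d * eLpNorm' f 2 (signedSumLaw (v :: l)) ^ 2 := by
          rw [eLpNorm'_two_signedSumLaw_cons_sq l hf hA hB hadd hsub, mul_add]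

end Bonami

section WeakLimit

variable {Ω : Type*} [MeasurableSpace Ω] {φ : Ω → ℝ≥0} {r : ℝ} {D : ℝ≥0∞}

-- Here `S` will be the mean of `u`. Truncating at `c * S` makes the tail error proportional to `S`,
-- and rescaling by `R / S` then yields a truncation level `c * R` independent of the measure.
lemma mul_le_mul_min_add_rpow (hr : 1 ≤ r) {R S c : ℝ≥0} (hRS : R ≤ S) (hcS : 0 < c * S)
    (u : ℝ≥0) : R * u ≤ S * min u (c * R) + R * ((c * S) ^ (1 - r) * u ^ r) := by
  rcases le_or_gt u (c * S) with hu | hu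
  · refine le_add_right ?_
    rw [mul_min]
    refine le_min (by gcongr) ?_
    calc R * u ≤ R * (c * S) := by gcongr
      _ = S * (c * R) := by ring
  · refine le_add_left ?_
    gcongr
    calc u = u ^ (1 - r) * u ^ r := by
          rw [← NNReal.rpow_add (hcS.trans hu).ne', sub_add_cancel, NNReal.rpow_one]
      _ ≤ (c * S) ^ (1 - r) * u ^ r := by
          gcongr ?_ * _
          exact NNReal.rpow_le_rpow_of_nonpos hcS hu.le (by linarith)

lemma le_lintegral_min_add {ν : Measure Ω} (hφ : Measurable φ) (hr : 1 ≤ r)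
    (hfin : ∫⁻ x, φ x ∂ν ≠ ∞) (h : ∫⁻ x, (φ x : ℝ≥0∞) ^ r ∂ν ≤ D * (∫⁻ x, φ x ∂ν) ^ r)
    {R c : ℝ≥0} (hR : 0 < R) (hRφ : R ≤ ∫⁻ x, φ x ∂ν) (hc : 0 < c) :
    (R : ℝ≥0∞) ≤ ∫⁻ x, (min (φ x) (c * R) : ℝ≥0) ∂ν + R * (D * c ^ (1 - r)) := by
  lift ∫⁻ x, φ x ∂ν to ℝ≥0 using hfin with S hS
  have hS0 : 0 < S := hR.trans_le (ENNReal.coe_le_coe.1 hRφ)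
  have hcS : 0 < c * S := mul_pos hc hS0
  have hpoint (x : Ω) : R * (φ x : ℝ≥0∞) ≤ S * (min (φ x) (c * R) : ℝ≥0) +
      R * (((c * S) ^ (1 - r) : ℝ≥0) * (φ x : ℝ≥0∞) ^ r) := by
    rw [← ENNReal.coe_rpow_of_nonneg _ (by linarith)]
    exact_mod_cast mul_le_mul_min_add_rpow hr (ENNReal.coe_le_coe.1 hRφ) hcS (φ x)
  have hscale : (((c * S) ^ (1 - r) : ℝ≥0) : ℝ≥0∞) * S ^ r = S * c ^ (1 - r) := by
    rw [← ENNReal.coe_rpow_of_nonneg _ (by linarith), ← ENNReal.coe_rpow_of_ne_zero hc.ne']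
    norm_cast
    rw [NNReal.mul_rpow, mul_assoc, ← NNReal.rpow_add hS0.ne', sub_add_cancel, NNReal.rpow_one,
      mul_comm]
  have hint : (S : ℝ≥0∞) * R ≤
      S * (∫⁻ x, (min (φ x) (c * R) : ℝ≥0) ∂ν + R * (D * c ^ (1 - r))) :=
    calc (S : ℝ≥0∞) * R = ∫⁻ x, R * (φ x : ℝ≥0∞) ∂ν := by
          rw [lintegral_const_mul' _ _ ENNReal.coe_ne_top, ← hS, mul_comm]
      _ ≤ ∫⁻ x, S * (min (φ x) (c * R) : ℝ≥0) +
            R * (((c * S) ^ (1 - r) : ℝ≥0) * (φ x : ℝ≥0∞) ^ r) ∂ν := lintegral_mono hpoint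
      _ = S * ∫⁻ x, (min (φ x) (c * R) : ℝ≥0) ∂ν +
            R * (((c * S) ^ (1 - r) : ℝ≥0) * ∫⁻ x, (φ x : ℝ≥0∞) ^ r ∂ν) := by
          rw [lintegral_add_left (by fun_prop)]
          simp_rw [lintegral_const_mul' _ _ ENNReal.coe_ne_top]
      _ ≤ S * ∫⁻ x, (min (φ x) (c * R) : ℝ≥0) ∂ν +
            R * (((c * S) ^ (1 - r) : ℝ≥0) * (D * S ^ r)) := by gcongr
      _ = S * (∫⁻ x, (min (φ x) (c * R) : ℝ≥0) ∂ν + R * (D * c ^ (1 - r))) := by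
          rw [mul_left_comm _ D, hscale]
          ring
  exact (ENNReal.mul_le_mul_iff_right (ENNReal.coe_ne_zero.2 hS0.ne') ENNReal.coe_ne_top).1 hint

variable [TopologicalSpace Ω] [OpensMeasurableSpace Ω]
  {μs : ℕ → ProbabilityMeasure Ω} {μ : ProbabilityMeasure Ω}

lemma liminf_lintegral_le_of_lintegral_rpow_le (hφ : Continuous φ) (hμ : Tendsto μs atTop (𝓝 μ))
    (hr : 1 < r) (hD : D ≠ ∞) (hfin : ∀ m, ∫⁻ x, φ x ∂(μs m : Measure Ω) ≠ ∞)
    (h : ∀ m, ∫⁻ x, (φ x : ℝ≥0∞) ^ r ∂(μs m : Measure Ω) ≤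
      D * (∫⁻ x, φ x ∂(μs m : Measure Ω)) ^ r) :
    liminf (fun m ↦ ∫⁻ x, φ x ∂(μs m : Measure Ω)) atTop ≤ ∫⁻ x, φ x ∂(μ : Measure Ω) := by
  refine ENNReal.le_of_forall_nnreal_lt fun R hR ↦ ?_
  rcases eq_zero_or_pos R with rfl | hR0
  · simp
  have hge : ∀ᶠ m in atTop, (R : ℝ≥0∞) ≤ ∫⁻ x, φ x ∂(μs m : Measure Ω) :=
    (eventually_lt_of_lt_liminf hR).mono fun _ ↦ le_of_lt
  have htrunc {c : ℝ≥0} (hc : 0 < c) :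
      (R : ℝ≥0∞) ≤ ∫⁻ x, φ x ∂(μ : Measure Ω) + R * (D * c ^ (1 - r)) := by
    let ψ : Ω →ᵇ ℝ≥0 := BoundedContinuousFunction.mkOfBound
      ⟨fun x ↦ min (φ x) (c * R), by fun_prop⟩ (c * R) fun x y ↦ by
        have hmem (z : Ω) : ((min (φ z) (c * R) : ℝ≥0) : ℝ) ∈ Set.Icc (0 : ℝ) (c * R) :=
          ⟨NNReal.coe_nonneg _, by exact_mod_cast min_le_right _ _⟩
        exact (Real.dist_le_of_mem_Icc (hmem x) (hmem y)).trans_eq (sub_zero _)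
    have hlim := (ProbabilityMeasure.tendsto_iff_forall_lintegral_tendsto.1 hμ ψ).add_const
      (R * (D * (c : ℝ≥0∞) ^ (1 - r)))
    calc (R : ℝ≥0∞) ≤ ∫⁻ x, ψ x ∂(μ : Measure Ω) + R * (D * c ^ (1 - r)) :=
          ge_of_tendsto hlim <| hge.mono fun m hm ↦
            le_lintegral_min_add hφ.measurable hr.le (hfin m) (h m) hR0 hm hc
      _ ≤ ∫⁻ x, φ x ∂(μ : Measure Ω) + R * (D * c ^ (1 - r)) := by
          gcongr with x
          exact min_le_left _ _
  have hvanish : Tendsto (fun c : ℝ≥0 ↦ (c : ℝ≥0∞) ^ (1 - r)) atTop (𝓝 0) := by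
    rw [← ENNReal.top_rpow_of_neg (sub_neg.2 hr)]
    exact (ENNReal.continuous_rpow_const.tendsto ∞).comp
      (ENNReal.tendsto_coe_nhds_top.2 tendsto_id)
  have hlim : Tendsto (fun c : ℝ≥0 ↦ ∫⁻ x, φ x ∂(μ : Measure Ω) + R * (D * (c : ℝ≥0∞) ^ (1 - r)))
      atTop (𝓝 (∫⁻ x, φ x ∂(μ : Measure Ω))) := by
    simpa using (ENNReal.Tendsto.const_mul (ENNReal.Tendsto.const_mul hvanish (.inr hD))
      (.inr ENNReal.coe_ne_top)).const_add (∫⁻ x, φ x ∂(μ : Measure Ω))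
  exact ge_of_tendsto hlim ((eventually_gt_atTop 0).mono fun _ ↦ htrunc)

variable [HasOuterApproxClosed Ω]

lemma lintegral_rpow_le_of_tendsto (hφ : Continuous φ) (hμ : Tendsto μs atTop (𝓝 μ)) (hr : 1 < r)
    (hD : D ≠ ∞) (hfin : ∀ m, ∫⁻ x, φ x ∂(μs m : Measure Ω) ≠ ∞)
    (h : ∀ m, ∫⁻ x, (φ x : ℝ≥0∞) ^ r ∂(μs m : Measure Ω) ≤
      D * (∫⁻ x, φ x ∂(μs m : Measure Ω)) ^ r) :
    ∫⁻ x, (φ x : ℝ≥0∞) ^ r ∂(μ : Measure Ω) ≤ D * (∫⁻ x, φ x ∂(μ : Measure Ω)) ^ r := by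
  have hr0 : 0 ≤ r := by linarith
  have hfatou : ∫⁻ x, (φ x : ℝ≥0∞) ^ r ∂(μ : Measure Ω) ≤
      liminf (fun m ↦ ∫⁻ x, (φ x : ℝ≥0∞) ^ r ∂(μs m : Measure Ω)) atTop := by
    simpa [← ENNReal.ofReal_rpow_of_nonneg, hr0] using
      lintegral_le_liminf_lintegral_of_forall_isOpen_measure_le_liminf_measure
        (f := fun x ↦ (φ x : ℝ) ^ r) (by fun_prop (disch := assumption)) (fun x ↦ by positivity)
        fun G hG ↦ ProbabilityMeasure.le_liminf_measure_open_of_tendsto hμ hG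
  have hmono : Monotone fun u : ℝ≥0∞ ↦ D * u ^ r := fun u v huv ↦ by dsimp only; gcongr
  have hcont : Continuous fun u : ℝ≥0∞ ↦ D * u ^ r :=
    (ENNReal.continuous_const_mul hD).comp ENNReal.continuous_rpow_const
  calc ∫⁻ x, (φ x : ℝ≥0∞) ^ r ∂(μ : Measure Ω)
      ≤ liminf (fun m ↦ ∫⁻ x, (φ x : ℝ≥0∞) ^ r ∂(μs m : Measure Ω)) atTop := hfatou
    _ ≤ liminf (fun m ↦ D * (∫⁻ x, φ x ∂(μs m : Measure Ω)) ^ r) atTop :=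
        liminf_le_liminf (.of_forall h)
    _ = D * (liminf (fun m ↦ ∫⁻ x, φ x ∂(μs m : Measure Ω)) atTop) ^ r :=
        (hmono.map_liminf_of_continuousAt _ hcont.continuousAt).symm
    _ ≤ D * (∫⁻ x, φ x ∂(μ : Measure Ω)) ^ r := by
        gcongr
        exact liminf_lintegral_le_of_lintegral_rpow_le hφ hμ hr hD hfin h

lemma eLpNorm'_sq_le_of_tendsto {f : Ω → ℝ} (hf : Continuous f) (hμ : Tendsto μs atTop (𝓝 μ))
    {q : ℝ} (hq : 2 < q) (hD : D ≠ ∞) (hfin : ∀ m, eLpNorm' f 2 (μs m) ≠ ∞)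
    (h : ∀ m, eLpNorm' f q (μs m) ^ 2 ≤ D * eLpNorm' f 2 (μs m) ^ 2) :
    eLpNorm' f q μ ^ 2 ≤ D * eLpNorm' f 2 μ ^ 2 := by
  have hq0 : 0 < q := by linarith
  have hq2 : 0 < q / 2 := by positivity
  have hnormq (ν : Measure Ω) : eLpNorm' f q ν ^ 2 ≤ D * eLpNorm' f 2 ν ^ 2 ↔
      ∫⁻ x, ((‖f x‖₊ ^ 2 : ℝ≥0) : ℝ≥0∞) ^ (q / 2) ∂ν ≤
        D ^ (q / 2) * (∫⁻ x, (‖f x‖₊ ^ 2 : ℝ≥0) ∂ν) ^ (q / 2) := by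
    rw [eLpNorm'_sq hq0, eLpNorm'_two_sq, one_div, ENNReal.rpow_inv_le_iff hq2,
      ENNReal.mul_rpow_of_nonneg _ _ hq2.le]
    rfl
  rw [hnormq]
  refine lintegral_rpow_le_of_tendsto (by fun_prop) hμ (by linarith)
    (ENNReal.rpow_ne_top_of_nonneg hq2.le hD) (fun m ↦ ?_) fun m ↦ (hnormq _).1 (h m)
  have := ENNReal.pow_ne_top (n := 2) (hfin m)
  rwa [eLpNorm'_two_sq] at this

end WeakLimit

section CentralLimit

variable {E : Type*} [NormedAddCommGroup E] [InnerProductSpace ℝ E] [MeasurableSpace E]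
  [BorelSpace E]

lemma charFun_signedSumLaw (l : List E) (t : E) :
    charFun (signedSumLaw l) t = (l.map fun v ↦ (Real.cos (inner ℝ v t) : ℂ)).prod := by
  induction l with
  | nil => simp [signedSumLaw, charFun_dirac]
  | cons v l ih =>
    have hint (w : E) : Integrable (BoundedContinuousFunction.innerProbChar t)
        ((signedSumLaw l).map (· + w)) := BoundedContinuousFunction.integrable _ _
    rw [signedSumLaw, charFun_eq_integral_innerProbChar, integral_smul_measure,
      integral_add_measure (hint v) (hint (-v)), ← charFun_eq_integral_innerProbChar,
      ← charFun_eq_integral_innerProbChar, charFun_map_add_const, charFun_map_add_const, ih,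
      List.map_cons, List.prod_cons, Complex.ofReal_cos, Complex.cos, inner_neg_left]
    simp only [ENNReal.toReal_inv, ENNReal.toReal_ofNat, Complex.ofReal_cos, Complex.ofReal_neg,
      neg_mul, smul_add, Complex.real_smul, Complex.ofReal_inv, Complex.ofReal_ofNat]
    ring

/-- The list consisting of `m` copies of `m^(-1/2) bᵢ` for each vector `bᵢ` of the standard
orthonormal basis. Its signed sums are random walks approximating the standard Gaussian. -/
noncomputable def orthonormalSteps (E : Type*) [NormedAddCommGroup E] [InnerProductSpace ℝ E]
    [FiniteDimensional ℝ E] (m : ℕ) : List E :=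
  Finset.univ.toList.flatMap fun i ↦ List.replicate m ((√m)⁻¹ • stdOrthonormalBasis ℝ E i)

lemma tendsto_cos_inv_sqrt_mul_pow (t : ℝ) :
    Tendsto (fun m : ℕ ↦ Real.cos ((√m)⁻¹ * t) ^ m) atTop (𝓝 (Real.exp (-t ^ 2 / 2))) := by
  have hcos (t : ℝ) : charFun (signedSumLaw [1]) t = (Real.cos t : ℂ) := by
    simp [charFun_signedSumLaw]
  have hint (f : ℝ → ℝ) : ∫ x, f x ∂signedSumLaw [1] = (f 1 + f (-1)) / 2 := by
    rw [signedSumLaw, signedSumLaw, Measure.map_dirac, Measure.map_dirac, integral_smul_measure,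
      integral_add_measure (integrable_dirac (by simp)) (integrable_dirac (by simp)),
      integral_dirac, integral_dirac]
    simp [inv_mul_eq_div]
  have hmean : ∫ x : ℝ, x ∂signedSumLaw [1] = 0 := by simp [hint]
  have hvar : ∫ x : ℝ, x ^ 2 ∂signedSumLaw [1] = 1 := by simp [hint]
  have h := tendsto_charFun_inv_sqrt_mul_pow (X := id) aemeasurable_id hmean hvar t
  rw [Measure.map_id] at h
  simp_rw [hcos] at h
  exact_mod_cast (Complex.continuous_re.tendsto _).comp h

variable [FiniteDimensional ℝ E]

lemma tendsto_signedSumLaw_orthonormalSteps :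
    Tendsto (β := ProbabilityMeasure E)
      (fun m ↦ ⟨signedSumLaw (orthonormalSteps E m), inferInstance⟩) atTop
      (𝓝 ⟨ProbabilityTheory.stdGaussian E, inferInstance⟩) := by
  refine ProbabilityMeasure.tendsto_iff_tendsto_charFun.2 fun t ↦ ?_
  have hchar (m : ℕ) : charFun (signedSumLaw (orthonormalSteps E m)) t =
      ∏ i, (Real.cos ((√m)⁻¹ * inner ℝ (stdOrthonormalBasis ℝ E i) t) : ℂ) ^ m := by
    simp_rw [charFun_signedSumLaw, orthonormalSteps, List.flatMap, List.map_flatten,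
      List.prod_flatten, List.map_map]
    rw [Finset.prod_map_toList]
    simp [inner_smul_left]
  have hlim : Tendsto (fun m : ℕ ↦
      ∏ i, Real.cos ((√m)⁻¹ * inner ℝ (stdOrthonormalBasis ℝ E i) t) ^ m) atTop
      (𝓝 (Real.exp (-‖t‖ ^ 2 / 2))) := by
    rw [← (stdOrthonormalBasis ℝ E).sum_sq_inner_right t, ← Finset.sum_neg_distrib, Finset.sum_div,
      Real.exp_sum]
    exact tendsto_finsetProd _ fun i _ ↦ tendsto_cos_inv_sqrt_mul_pow _
  simp only [ProbabilityMeasure.coe_mk, hchar, charFun_stdGaussian]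
  exact_mod_cast (Complex.continuous_ofReal.tendsto _).comp hlim

end CentralLimit

theorem stmt2_general {E : Type*} [NormedAddCommGroup E] [InnerProductSpace ℝ E]
    [FiniteDimensional ℝ E] [MeasurableSpace E] [BorelSpace E] {d : ℕ} {f : E → ℝ}
    (hf : Continuous f) (hd : IsFrechetPolynomial d f) {q : ℝ} (hq : 2 < q) :
    eLpNorm' f q (ProbabilityTheory.stdGaussian E) ≤
      ENNReal.ofReal ((q - 1) ^ ((d : ℝ) / 2)) *
        eLpNorm' f 2 (ProbabilityTheory.stdGaussian E) := by
  have hq1 : 0 ≤ q - 1 := by linarith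
  have hsq : ENNReal.ofReal ((q - 1) ^ ((d : ℝ) / 2)) ^ 2 = ENNReal.ofReal (q - 1) ^ d := by
    rw [← ENNReal.ofReal_pow (by positivity), ← ENNReal.ofReal_pow hq1,
      ← Real.rpow_mul_natCast hq1, ← Real.rpow_natCast]
    norm_num
  rw [← ENNReal.pow_le_pow_left_iff two_ne_zero, mul_pow, hsq]
  exact eLpNorm'_sq_le_of_tendsto hf tendsto_signedSumLaw_orthonormalSteps hq
    (ENNReal.pow_ne_top ENNReal.ofReal_ne_top)
    (fun m ↦ eLpNorm'_signedSumLaw_ne_top _ hf.measurable two_pos)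
    fun m ↦ hd.eLpNorm'_signedSumLaw_sq_le hq.le hf.measurable _

section GaussNorm

lemma integrable_mvPolynomial_eval_pi {ι : Type*} [Fintype ι] {μ : ι → Measure ℝ}
    [∀ i, SigmaFinite (μ i)] (hμ : ∀ i k, Integrable (fun x : ℝ ↦ x ^ k) (μ i))
    (p : MvPolynomial ι ℝ) : Integrable (fun x ↦ MvPolynomial.eval x p) (Measure.pi μ) := by
  simp_rw [MvPolynomial.eval_eq']
  exact integrable_finsetSum _ fun m _ ↦
    (Integrable.fintype_prod (f := fun i x ↦ x ^ m i) fun i ↦ hμ i (m i)).const_mul _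

lemma integrable_pow_gaussianReal (m : ℝ) (v : ℝ≥0) (k : ℕ) :
    Integrable (fun x : ℝ ↦ x ^ k) (gaussianReal m v) :=
  integrable_pow_of_integrable_exp_mul one_ne_zero (integrable_exp_mul_gaussianReal 1)
    (integrable_exp_mul_gaussianReal (-1)) k

variable {n : ℕ}

lemma eLpNorm'_stdGaussian_euclideanSpace (q : ℝ) {f : (Fin n → ℝ) → ℝ} (hf : Measurable f) :
    eLpNorm' (fun x ↦ f x.ofLp) q (ProbabilityTheory.stdGaussian (EuclideanSpace ℝ (Fin n))) =
      eLpNorm' f q (_root_.stdGaussian n) := by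
  simp_rw [eLpNorm'_eq_lintegral_enorm]
  rw [← map_pi_eq_stdGaussian, lintegral_map (by fun_prop) (by fun_prop)]
  rfl

lemma gaussNorm_eq_toReal_eLpNorm' {q : ℝ} (hq : 0 ≤ q) {f : (Fin n → ℝ) → ℝ} (hf : Measurable f) :
    gaussNorm n q f = (eLpNorm' f q (_root_.stdGaussian n)).toReal := by
  rw [gaussNorm, eLpNorm'_eq_lintegral_enorm, ← ENNReal.toReal_rpow,
    integral_eq_lintegral_of_nonneg_ae (.of_forall fun x ↦ by positivity) (by fun_prop)]
  simp_rw [Real.enorm_eq_ofReal_abs, ENNReal.ofReal_rpow_of_nonneg (abs_nonneg _) hq]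

lemma eLpNorm'_two_mvPolynomial_eval_ne_top (p : MvPolynomial (Fin n) ℝ) :
    eLpNorm' (fun x ↦ MvPolynomial.eval x p) 2 (_root_.stdGaussian n) ≠ ∞ := by
  have hsq := integrable_mvPolynomial_eval_pi
    (fun _ : Fin n ↦ integrable_pow_gaussianReal 0 1) (p ^ 2)
  refine ne_of_apply_ne (· ^ 2) ?_
  rw [eLpNorm'_two_sq]
  simpa [HasFiniteIntegral, _root_.stdGaussian] using hsq.2.ne

lemma gaussNorm_mvPolynomial_eval_le {p : MvPolynomial (Fin n) ℝ} {q c : ℝ} (hq : 0 ≤ q)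
    (hc : 0 ≤ c)
    (h : eLpNorm' (fun x ↦ MvPolynomial.eval x.ofLp p) q
        (ProbabilityTheory.stdGaussian (EuclideanSpace ℝ (Fin n))) ≤
      ENNReal.ofReal c * eLpNorm' (fun x ↦ MvPolynomial.eval x.ofLp p) 2
        (ProbabilityTheory.stdGaussian (EuclideanSpace ℝ (Fin n)))) :
    gaussNorm n q (fun x ↦ MvPolynomial.eval x p) ≤
      c * gaussNorm n 2 (fun x ↦ MvPolynomial.eval x p) := by
  have hp : Measurable fun x ↦ MvPolynomial.eval x p := (MvPolynomial.continuous_eval p).measurable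
  rw [eLpNorm'_stdGaussian_euclideanSpace q hp, eLpNorm'_stdGaussian_euclideanSpace 2 hp] at h
  rw [gaussNorm_eq_toReal_eLpNorm' hq hp, gaussNorm_eq_toReal_eLpNorm' zero_le_two hp,
    ← ENNReal.toReal_ofReal_mul c _ hc]
  exact ENNReal.toReal_mono
    (ENNReal.mul_ne_top ENNReal.ofReal_ne_top (eLpNorm'_two_mvPolynomial_eval_ne_top p)) h

end GaussNorm

/-- Hypercontractivity: `|p|_t ≤ (t-1)^{d/2} |p|_2` for degree-`d` polynomials. -/
theorem stmt2 (n d : ℕ) (p : MvPolynomial (Fin n) ℝ) (hp : p.totalDegree ≤ d)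
    (t : ℝ) (ht : 2 < t) :
    gaussNorm n t (fun X => MvPolynomial.eval X p) ≤
      (t - 1) ^ ((d : ℝ) / 2) * gaussNorm n 2 (fun X => MvPolynomial.eval X p) := by
  have hpoly := IsFrechetPolynomial.mvPolynomial_eval p fun i ↦
    ((EuclideanSpace.proj i : EuclideanSpace ℝ (Fin n) →L[ℝ] ℝ) : EuclideanSpace ℝ (Fin n) →+ ℝ)
  exact gaussNorm_mvPolynomial_eval_le (by linarith) (Real.rpow_nonneg (by linarith) _)
    (stmt2_general (p.continuous_eval.comp (PiLp.continuous_ofLp 2 _)) (hpoly.mono hp) ht)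
end

section
/- For every polynomial p of degree at most d on ℝ^n and every real θ ≠ 0, the quantity |p_θ^{(d)}(X)|_2 is independent of X; that is, the function X ↦ |p_θ^{(d)}(X)|_2 is constant on ℝ^n. -/
open MeasureTheory ProbabilityTheory

/-
For a fixed direction `Y`, the map `p ↦ p ∘ N_Y^θ` substitutes `cos θ · X_i + sin θ · Y_i` for
`X_i`, and for two directions `Y`, `Z` these linear forms differ only by constants. By the Leibniz
rule the difference of two such substitutions lowers the total degree, so each noisy derivative of
a nonconstant polynomial is a polynomial of smaller degree, and `d` of them turn a polynomial of
degree at most `d` into a constant, whatever the directions are. The integrand defining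
`|p_θ^{(d)}(X)|₂²` is therefore already independent of `X` before averaging.
-/

section Substitution

open MvPolynomial

variable {ι σ τ R : Type*}

theorem totalDegree_multiset_prod_map_le [CommSemiring R] {f : ι → MvPolynomial τ R} {k : ℕ}
    (hf : ∀ i, (f i).totalDegree ≤ k) (s : Multiset ι) :
    (s.map f).prod.totalDegree ≤ s.card * k := by
  have hdeg : ∀ e ∈ (s.map f).map totalDegree, e ≤ k := by
    simpa only [Multiset.forall_mem_map_iff] using fun i _ => hf i
  calc _ ≤ ((s.map f).map totalDegree).sum := totalDegree_multiset_prod _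
    _ ≤ ((s.map f).map totalDegree).card • k := Multiset.sum_le_card_nsmul _ _ hdeg
    _ = s.card * k := by simp only [Multiset.card_map, smul_eq_mul]

theorem bind₁_eq_sum_toMultiset [CommSemiring R] (f : σ → MvPolynomial τ R)
    (p : MvPolynomial σ R) :
    bind₁ f p = ∑ s ∈ p.support, coeff s p • ((Finsupp.toMultiset s).map f).prod := by
  classical
  conv_lhs => rw [p.as_sum, map_sum]
  refine Finset.sum_congr rfl fun s _ => ?_
  rw [bind₁_monomial, smul_eq_C_mul, Finset.prod_multiset_map_count, Finsupp.toFinset_toMultiset]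
  simp only [Finsupp.count_toMultiset]

variable [CommRing R]

theorem totalDegree_multiset_prod_map_sub_le {f g : ι → MvPolynomial τ R} {k : ℕ}
    (hf : ∀ i, (f i).totalDegree ≤ k) (hfg : ∀ i, (f i - g i).totalDegree ≤ k - 1)
    (s : Multiset ι) :
    ((s.map f).prod - (s.map g).prod).totalDegree ≤ s.card * k - 1 := by
  induction s using Multiset.induction with
  | empty => simp
  | cons i s ih =>
    have leibniz : ((i ::ₘ s).map f).prod - ((i ::ₘ s).map g).prod =
        (f i - g i) * (s.map f).prod + g i * ((s.map f).prod - (s.map g).prod) := by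
      simp only [Multiset.map_cons, Multiset.prod_cons]
      ring
    have hg : (g i).totalDegree ≤ k := by
      rw [← sub_sub_cancel (f i) (g i)]
      exact (totalDegree_sub _ _).trans (max_le (hf i) ((hfg i).trans (Nat.sub_le k 1)))
    rw [leibniz, Multiset.card_cons, Nat.succ_mul]
    refine (totalDegree_add _ _).trans (max_le ?_ ?_)
    · have hmul := totalDegree_mul (f i - g i) (s.map f).prod
      have hprod := totalDegree_multiset_prod_map_le hf s
      have hi := hfg i
      rcases k.eq_zero_or_pos with rfl | hk <;> omega
    · have hmul := totalDegree_mul (g i) ((s.map f).prod - (s.map g).prod)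
      rcases s.empty_or_exists_mem with rfl | ⟨j, hj⟩
      · simp
      · have hcard : k ≤ s.card * k :=
          Nat.le_mul_of_pos_left k (Multiset.card_pos_iff_exists_mem.mpr ⟨j, hj⟩)
        rcases k.eq_zero_or_pos with rfl | hk <;> omega

theorem totalDegree_bind₁_sub_bind₁_le {f g : σ → MvPolynomial τ R} {k : ℕ}
    (hf : ∀ i, (f i).totalDegree ≤ k) (hfg : ∀ i, (f i - g i).totalDegree ≤ k - 1)
    (p : MvPolynomial σ R) :
    (bind₁ f p - bind₁ g p).totalDegree ≤ p.totalDegree * k - 1 := by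
  simp only [bind₁_eq_sum_toMultiset, ← Finset.sum_sub_distrib, ← smul_sub]
  refine totalDegree_finsetSum_le fun s hs => ?_
  have hcard : (Finsupp.toMultiset s).card ≤ p.totalDegree := by
    rw [Finsupp.card_toMultiset]
    exact le_totalDegree hs
  calc _ ≤ _ := totalDegree_smul_le _ _
    _ ≤ (Finsupp.toMultiset s).card * k - 1 := totalDegree_multiset_prod_map_sub_le hf hfg _
    _ ≤ p.totalDegree * k - 1 := by gcongr

end Substitution

section NoisyDerivative

open MvPolynomial

variable {n : ℕ} (θ : ℝ)

/-- The coordinates of `X ↦ N_Y^θ(X)` as polynomials in `X`. -/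
noncomputable def noisyCoord (Y : Fin n → ℝ) (i : Fin n) : MvPolynomial (Fin n) ℝ :=
  C (Real.cos θ) * X i + C (Real.sin θ * Y i)

/-- The noisy derivative `D_{Y,Z}^θ p` of a polynomial `p`, as a polynomial. -/
noncomputable def noisyDerivPoly (Y Z : Fin n → ℝ) (p : MvPolynomial (Fin n) ℝ) :
    MvPolynomial (Fin n) ℝ :=
  θ⁻¹ • (bind₁ (noisyCoord θ Y) p - bind₁ (noisyCoord θ Z) p)

theorem totalDegree_noisyCoord_le (Y : Fin n → ℝ) (i : Fin n) :
    (noisyCoord θ Y i).totalDegree ≤ 1 := by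
  refine (totalDegree_add _ _).trans (max_le ?_ ?_)
  · rw [← smul_eq_C_mul]
    exact (totalDegree_smul_le _ _).trans (totalDegree_X i).le
  · simp only [totalDegree_C, zero_le]

theorem noisyCoord_sub_noisyCoord (Y Z : Fin n → ℝ) (i : Fin n) :
    noisyCoord θ Y i - noisyCoord θ Z i = C (Real.sin θ * Y i - Real.sin θ * Z i) := by
  rw [noisyCoord, noisyCoord, add_sub_add_left_eq_sub, C_sub]

theorem eval_bind₁_noisyCoord (Y W : Fin n → ℝ) (p : MvPolynomial (Fin n) ℝ) :
    eval W (bind₁ (noisyCoord θ Y) p) = eval (noisy θ Y W) p := by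
  have hcoord : (fun i => eval W (noisyCoord θ Y i)) = noisy θ Y W := by
    funext i
    simp [noisyCoord, noisy]
  rw [← hcoord]
  exact aeval_bind₁ W (noisyCoord θ Y) p

theorem totalDegree_noisyDerivPoly_le (Y Z : Fin n → ℝ) (p : MvPolynomial (Fin n) ℝ) :
    (noisyDerivPoly θ Y Z p).totalDegree ≤ p.totalDegree - 1 := by
  have hconst (i : Fin n) : (noisyCoord θ Y i - noisyCoord θ Z i).totalDegree ≤ 1 - 1 := by
    rw [noisyCoord_sub_noisyCoord, totalDegree_C]
  calc _ ≤ _ := totalDegree_smul_le _ _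
    _ ≤ p.totalDegree * 1 - 1 :=
      totalDegree_bind₁_sub_bind₁_le (totalDegree_noisyCoord_le θ Y) hconst p
    _ = p.totalDegree - 1 := by rw [mul_one]

theorem noisyDeriv_eval (Y Z : Fin n → ℝ) (p : MvPolynomial (Fin n) ℝ) :
    noisyDeriv θ Y Z (fun W => eval W p) = fun W => eval W (noisyDerivPoly θ Y Z p) := by
  funext W
  simp only [noisyDeriv, noisyDerivPoly, smul_eval, map_sub, eval_bind₁_noisyCoord,
    div_eq_inv_mul]

theorem derivNormSq_eval_eq_of_totalDegree_le {d : ℕ} {p : MvPolynomial (Fin n) ℝ}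
    (hp : p.totalDegree ≤ d) (W W' : Fin n → ℝ) :
    derivNormSq n θ d (fun V => eval V p) W = derivNormSq n θ d (fun V => eval V p) W' := by
  induction d generalizing p with
  | zero =>
    rw [totalDegree_eq_zero_iff_eq_C.mp (Nat.le_zero.mp hp)]
    simp only [derivNormSq, eval_C]
  | succ d ih =>
    simp only [derivNormSq, noisyDeriv_eval]
    congr with ⟨Y, Z⟩
    exact ih ((totalDegree_noisyDerivPoly_le θ Y Z p).trans (Nat.sub_le_of_le_add hp))

end NoisyDerivative

/-- For a degree-`d` polynomial, `|p_θ^{(d)}(X)|₂` does not depend on `X`. -/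
theorem stmt6 (n d : ℕ) (p : MvPolynomial (Fin n) ℝ) (hp : p.totalDegree ≤ d)
    (θ : ℝ) (hθ : θ ≠ 0) :
    ∀ X X' : Fin n → ℝ,
      Real.sqrt (derivNormSq n θ d (fun W => MvPolynomial.eval W p) X) =
        Real.sqrt (derivNormSq n θ d (fun W => MvPolynomial.eval W p) X') := by
  intro X X'
  rw [derivNormSq_eval_eq_of_totalDegree_le θ hp X X']
end
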